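/- Let Λ be a Nakayama algebra, let {M_1,…,M_m} be a complete set of representatives of isomorphism classes of indecomposable Λ-modules, and set M† = M_1 ⊕ … ⊕ M_m. Then φdim Λ = min{t ≥ 0 : α(Ω^t(M†)) = α(Ω^{t+j}(M†)) for all j ≥ 0}, where α(X) is the number of pairwise non-isomorphic non-projective indecomposable direct summands of X. -/

import Mathlib

/-!
# `φdim` of a Nakayama algebra through the count of nonprojective summands of `Ω^t M†`

Over a Nakayama algebra an indecomposable module is uniserial, and its projective cover is
uniserial too, so its syzygy is zero or indecomposable (`exists_syzygy`). Thus `Ω` acts on the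
finite set of nonprojective indecomposables as a partial map `g`, undefined where the syzygy is
projective (`IsOmegaMap`). For a finitely generated `N`, let `D_t(N)` be the image under `g^t` of
the set of nonprojective indecomposable summands of `N` (`iterImage`).

* The rank of `L^t⟨add N⟩` is `|D_t(N)|` (`syzygyRank_eq`), because the nonprojective
  indecomposables have independent classes in `K₀` (`linearIndependent_classOf`). To see this,
  for `X` uniserial the maps `X → M` that are not split monomorphisms form a submodule
  `rad(X, M)` of `Hom(X, M)`, and the length over the base ring of `Hom(X, M) / rad(X, M)` is
  additive in `M`. If `X` is nonprojective it vanishes on projectives and on every indecomposable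
  not isomorphic to `X`, but not on `X`.
* `α(Ω^t M†) = |D_t(M†)|` (`alpha_eq`): the syzygy of a finite direct sum is the direct sum of the
  syzygies, and a sum of non-split maps out of a uniserial module is non-split, which forces an
  indecomposable summand of `⨁ Ω^t M_i` to be some `Ω^t M_i`.

Hence the right-hand side is `φ(M†)`. It bounds every `φ(N)`: once `|D_t(M†)|` is constant, `g` is
defined and injective on `D_t(M†)`, hence on the subset `D_t(N)` (`ncard_iterImage_stable`).
-/

/-!
Common definitions: Igusa–Todorov φ-function, syzygies, and cyclic Nakayama
algebras presented by monomial relations, following E. Sen,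
"The φ-dimension of cyclic Nakayama algebras".
-/

noncomputable section

namespace PhiDim

variable (Λ : Type) [Ring Λ]

/-- A module is *uniserial* if its submodules are totally ordered by inclusion. -/
def IsUniserial (M : ModuleCat.{0} Λ) : Prop :=
  ∀ N₁ N₂ : Submodule Λ M, N₁ ≤ N₂ ∨ N₂ ≤ N₁

/-- A module is *indecomposable* if it is nonzero and admits no nontrivial
direct sum decomposition. -/
def Indec (M : ModuleCat.{0} Λ) : Prop :=
  Nontrivial M ∧ ∀ N N' : Submodule Λ M, IsCompl N N' → N = ⊥ ∨ N' = ⊥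

/-- `X` is (isomorphic to) a direct summand of `M`. -/
def IsSummand (X M : ModuleCat.{0} Λ) : Prop :=
  ∃ N N' : Submodule Λ M, IsCompl N N' ∧ Nonempty (X ≃ₗ[Λ] N)

/-- `f : P → M` is a projective cover: `P` is projective, `f` is surjective and
its kernel is superfluous in `P`. -/
def IsProjCover {P M : ModuleCat.{0} Λ} (f : P →ₗ[Λ] M) : Prop :=
  Module.Projective Λ P ∧ Function.Surjective f ∧
    ∀ N : Submodule Λ P, N ⊔ LinearMap.ker f = ⊤ → N = ⊤

/-- `Y` is (isomorphic to) the first syzygy `Ω M`, i.e. the kernel of a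
projective cover of `M`. -/
def IsSyzygy (Y M : ModuleCat.{0} Λ) : Prop :=
  ∃ (P : ModuleCat.{0} Λ) (f : P →ₗ[Λ] M), IsProjCover Λ f ∧
    Nonempty (Y ≃ₗ[Λ] LinearMap.ker f)

/-- `Y` is (isomorphic to) the `n`-th syzygy `Ω^n M`. -/
def IsNthSyzygy : ℕ → ModuleCat.{0} Λ → ModuleCat.{0} Λ → Prop
  | 0, Y, M => Nonempty (Y ≃ₗ[Λ] M)
  | n + 1, Y, M => ∃ Z : ModuleCat.{0} Λ, IsSyzygy Λ Z M ∧ IsNthSyzygy n Y Z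

/-- `M` is `Ω`-periodic: `Ω^k M ≅ M` for some `k ≥ 1`. -/
def IsPeriodic (M : ModuleCat.{0} Λ) : Prop :=
  ∃ k : ℕ, 1 ≤ k ∧ IsNthSyzygy Λ k M M

/-- Projective dimension at most `n` (via minimal projective resolutions:
the `n`-th syzygy is projective). -/
def PdimLE (M : ModuleCat.{0} Λ) (n : ℕ) : Prop :=
  ∃ Y : ModuleCat.{0} Λ, IsNthSyzygy Λ n Y M ∧ Module.Projective Λ Y

/-- `M` has infinite projective dimension. -/
def HasInfinitePdim (M : ModuleCat.{0} Λ) : Prop :=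
  ¬ ∃ n : ℕ, PdimLE Λ M n

/-- The (left) global dimension is at most `n`: every finitely generated module
has projective dimension at most `n`. -/
def GlobalDimLE (n : ℕ) : Prop :=
  ∀ M : ModuleCat.{0} Λ, Module.Finite Λ M → PdimLE Λ M n

/-- `Λ` has infinite global dimension. -/
def HasInfiniteGlobalDim : Prop := ¬ ∃ n : ℕ, GlobalDimLE Λ n

/-- `M` has composition length `n`. -/
def HasLength (M : ModuleCat.{0} Λ) (n : ℕ) : Prop :=
  ∃ s : CompositionSeries (Submodule Λ M), s.head = ⊥ ∧ s.last = ⊤ ∧ s.length = n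

/-- The socle of a uniserial module: the smallest nonzero submodule. -/
def socle (M : Type) [AddCommGroup M] [Module Λ M] : Submodule Λ M :=
  sInf {N : Submodule Λ M | N ≠ ⊥}

/-- The radical of a uniserial (local) module: the largest proper submodule. -/
def radical (M : Type) [AddCommGroup M] [Module Λ M] : Submodule Λ M :=
  sSup {N : Submodule Λ M | N ≠ ⊤}

/-- `soc M ≅ T`. -/
def SocIso (M T : ModuleCat.{0} Λ) : Prop :=
  Nonempty (socle Λ M ≃ₗ[Λ] T)

/-- `top M = M / rad M ≅ T`. -/
def TopIso (M T : ModuleCat.{0} Λ) : Prop :=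
  Nonempty ((M ⧸ radical Λ M) ≃ₗ[Λ] T)

/-- `T` is a composition factor (a simple subquotient) of `M`. -/
def IsCompFactorOf (T M : ModuleCat.{0} Λ) : Prop :=
  ∃ (N₁ : Submodule Λ M) (N₀ : Submodule Λ N₁),
    Nonempty ((N₁ ⧸ N₀) ≃ₗ[Λ] T)

/-- The number of composition factors of a composition series `s` of `M`
isomorphic to `T`. -/
def factorCount (M : ModuleCat.{0} Λ) (s : CompositionSeries (Submodule Λ M))
    (T : ModuleCat.{0} Λ) : ℕ :=
  Nat.card {i : Fin s.length //
    Nonempty ((s i.succ ⧸ Submodule.comap (s i.succ).subtype (s i.castSucc)) ≃ₗ[Λ] T)}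

/-! ### The Igusa–Todorov function φ -/

/-- Finitely generated modules. -/
def FGMod := {M : ModuleCat.{0} Λ // Module.Finite Λ M}

/-- Generators of the relations defining `K₀`: `[C] - [A] - [B]` for `C ≅ A ⊕ B`,
and `[P]` for `P` projective. -/
def K0RelSet : Set (FreeAbelianGroup (FGMod Λ)) :=
  {x | ∃ A B C : FGMod Λ, Nonempty ((C.1 : Type) ≃ₗ[Λ] ((A.1 : Type) × (B.1 : Type))) ∧
        x = FreeAbelianGroup.of C - FreeAbelianGroup.of A - FreeAbelianGroup.of B} ∪
  {x | ∃ P : FGMod Λ, Module.Projective Λ P.1 ∧ x = FreeAbelianGroup.of P}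

def K0Rel : AddSubgroup (FreeAbelianGroup (FGMod Λ)) :=
  AddSubgroup.closure (K0RelSet Λ)

/-- `K₀`: the free abelian group on finitely generated modules, modulo
`[A ⊕ B] = [A] + [B]` and `[P] = 0` for projective `P`. -/
def K0 := FreeAbelianGroup (FGMod Λ) ⧸ K0Rel Λ

instance : AddCommGroup (K0 Λ) := QuotientAddGroup.Quotient.addCommGroup _

/-- The class `[M]` of a finitely generated module in `K₀`. -/
def classOf (M : FGMod Λ) : K0 Λ := QuotientAddGroup.mk (FreeAbelianGroup.of M)

/-- Generators of the subgroup `L^t ⟨add M⟩` of `K₀`: classes of `t`-th syzygies of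
the indecomposable direct summands of `M`. -/
def addGens (M : ModuleCat.{0} Λ) (t : ℕ) : Set (K0 Λ) :=
  {k | ∃ X : ModuleCat.{0} Λ, Indec Λ X ∧ IsSummand Λ X M ∧
        ∃ Y : FGMod Λ, IsNthSyzygy Λ t Y.1 X ∧ k = classOf Λ Y}

/-- The rank of `L^t ⟨add M⟩`. -/
def syzygyRank (M : ModuleCat.{0} Λ) (t : ℕ) : Cardinal :=
  Module.rank ℤ (AddSubgroup.closure (addGens Λ M t))

/-- The Igusa–Todorov function
`φ(M) = min { t | rank L^t ⟨add M⟩ = rank L^{t+j} ⟨add M⟩ for all j ≥ 1 }`. -/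
def phi (M : ModuleCat.{0} Λ) : ℕ :=
  sInf {t : ℕ | ∀ j : ℕ, 1 ≤ j → syzygyRank Λ M (t + j) = syzygyRank Λ M t}

/-- `φdim Λ = sup { φ(M) | M a finitely generated Λ-module }`. -/
def phiDim : ℕ∞ := ⨆ M : FGMod Λ, (phi Λ M.1 : ℕ∞)

/-- Isomorphism of modules as a setoid on `ModuleCat Λ`. -/
def isoSetoid : Setoid (ModuleCat.{0} Λ) where
  r M N := Nonempty (M ≃ₗ[Λ] N)
  iseqv := ⟨fun M => ⟨LinearEquiv.refl Λ M⟩, fun ⟨e⟩ => ⟨e.symm⟩, fun ⟨e⟩ ⟨f⟩ => ⟨e.trans f⟩⟩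

/-- `α(X)`: the number of pairwise non-isomorphic, non-projective, indecomposable
direct summands of `X`. -/
def alpha (X : ModuleCat.{0} Λ) : ℕ :=
  Nat.card {c : Quotient (isoSetoid Λ) // ∃ Y : ModuleCat.{0} Λ,
    Quotient.mk (isoSetoid Λ) Y = c ∧ Indec Λ Y ∧ ¬ Module.Projective Λ Y ∧ IsSummand Λ Y X}

/-! ### Cyclic Nakayama algebras presented by monomial relations -/

/-- A cyclic Nakayama artin algebra `Λ` on `N ≥ 3` vertices, presented by an
irredundant system of `r` monomial relations `α_{k_{2j}} ⋯ α_{k_{2j-1}} = 0`.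

* `S i` (for `i : ZMod N`) are the simple modules attached to the vertices of the
  cyclic quiver, `P i` a projective cover of `S i`, and `c i` the composition length
  of `P i` (the Kupisch series).
* `layer` expresses that the arrows of the quiver are exactly `α_i : i → i+1`:
  the radical of an indecomposable module with top `S i`, when nonzero, has top `S (i+1)`.
* `kOdd j = k_{2j-1}` and `kEven j = k_{2j}` record the start and end indices of the
  `j`-th relation; irredundancy and completeness of the system of relations is recorded
  by `relation_starts` (the chain of inclusions `P_v ↪ P_{v-1}` breaks exactly at the
  starting vertices of the relations); `relation_ends` says that the `j`-th relation
  is a path from `k_{2j-1}` to `k_{2j} + 1` consisting of `c (k_{2j-1})` arrows. -/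
structure CyclicNakayama (R : Type) (Λ : Type) [CommRing R] [Ring Λ] [Algebra R Λ] where
  artinianBase : IsArtinianRing R
  finiteAlgebra : Module.Finite R Λ
  N : ℕ
  three_le_N : 3 ≤ N
  r : ℕ
  one_le_r : 1 ≤ r
  S : ZMod N → ModuleCat.{0} Λ
  S_simple : ∀ i, IsSimpleModule Λ (S i)
  S_complete : ∀ T : ModuleCat.{0} Λ, IsSimpleModule Λ T → ∃ i, Nonempty (T ≃ₗ[Λ] S i)
  S_distinct : ∀ i j, Nonempty (S i ≃ₗ[Λ] S j) → i = j
  nakayama : ∀ M : ModuleCat.{0} Λ, Module.Finite Λ M → Indec Λ M → IsUniserial Λ M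
  P : ZMod N → ModuleCat.{0} Λ
  P_finite : ∀ i, Module.Finite Λ (P i)
  P_projective : ∀ i, Module.Projective Λ (P i)
  P_cover : ∀ i, ∃ f : P i →ₗ[Λ] S i, IsProjCover Λ f
  c : ZMod N → ℕ
  P_length : ∀ i, HasLength Λ (P i) (c i)
  two_le_c : ∀ i, 2 ≤ c i
  layer : ∀ M : ModuleCat.{0} Λ, Module.Finite Λ M → Indec Λ M → ∀ i : ZMod N,
    TopIso Λ M (S i) → radical Λ M ≠ ⊥ →
      TopIso Λ (ModuleCat.of Λ (radical Λ M)) (S (i + 1))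
  kOdd : ZMod r → ZMod N
  kEven : ZMod r → ZMod N
  kOdd_mono : ∀ j j' : ZMod r, j.val < j'.val → (kOdd j).val < (kOdd j').val
  relation_starts : ∀ v : ZMod N, (∃ j, kOdd j = v) ↔ c v ≠ c (v + 1) + 1
  relation_ends : ∀ j, kEven j + 1 = kOdd j + (c (kOdd j) : ZMod N)
  soc_min : ∀ j, SocIso Λ (P (kOdd j)) (S (kEven j))
  soc_classes : ∀ v : ZMod N, ∃ j, SocIso Λ (P v) (S (kEven j))

variable {R : Type} [CommRing R]
variable {Λ} [Algebra R Λ]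

/-- `D` is (a representative of) the module `Δ_j`: a shortest indecomposable module
with top `S_{k_{2(j-1)} + 1}` and socle `S_{k_{2j}}`. -/
def IsDelta (pres : CyclicNakayama R Λ) (j : ZMod pres.r) (D : ModuleCat.{0} Λ) : Prop :=
  Module.Finite Λ D ∧ Indec Λ D ∧
    TopIso Λ D (pres.S (pres.kEven (j - 1) + 1)) ∧ SocIso Λ D (pres.S (pres.kEven j)) ∧
    ∀ D' : ModuleCat.{0} Λ, Module.Finite Λ D' → Indec Λ D' →
      TopIso Λ D' (pres.S (pres.kEven (j - 1) + 1)) → SocIso Λ D' (pres.S (pres.kEven j)) →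
      ∀ n n' : ℕ, HasLength Λ D n → HasLength Λ D' n' → n ≤ n'

/-- `M` is a `Δ`-module: it admits a finite filtration whose successive subquotients
are isomorphic to modules among `Δ_1, …, Δ_r`. -/
def IsDeltaModule (pres : CyclicNakayama R Λ) (Δ : ZMod pres.r → ModuleCat.{0} Λ)
    (M : ModuleCat.{0} Λ) : Prop :=
  ∃ (n : ℕ) (F : Fin (n + 1) → Submodule Λ M), Monotone F ∧ F 0 = ⊥ ∧ F (Fin.last n) = ⊤ ∧
    ∀ i : Fin n, ∃ j : ZMod pres.r,
      Nonempty ((F i.succ ⧸ Submodule.comap (F i.succ).subtype (F i.castSucc)) ≃ₗ[Λ] Δ j)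

end PhiDim

namespace PhiDim

/-! ### Retracts and homomorphisms out of a uniserial module -/

section Retracts

variable {Λ : Type} [Ring Λ]

lemma IsSummand.exists_retract {X M : ModuleCat.{0} Λ} (h : IsSummand Λ X M) :
    ∃ (i : X →ₗ[Λ] M) (p : M →ₗ[Λ] X), p ∘ₗ i = LinearMap.id := by
  obtain ⟨N, N', hc, ⟨e⟩⟩ := h
  refine ⟨N.subtype ∘ₗ e.toLinearMap, e.symm.toLinearMap ∘ₗ Submodule.projectionOnto N N' hc, ?_⟩
  ext x
  simp

lemma isSummand_of_retract {X M : ModuleCat.{0} Λ} (i : X →ₗ[Λ] M) (p : M →ₗ[Λ] X)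
    (h : p ∘ₗ i = LinearMap.id) : IsSummand Λ X M := by
  have hpi : ∀ x, p (i x) = x := fun x => LinearMap.congr_fun h x
  have hi : Function.Injective i := fun x y hxy => by rw [← hpi x, ← hpi y, hxy]
  refine ⟨LinearMap.range i, LinearMap.ker p, ?_, ⟨LinearEquiv.ofInjective i hi⟩⟩
  constructor
  · rw [Submodule.disjoint_def]
    rintro _ ⟨x, rfl⟩ hx
    rw [LinearMap.mem_ker, hpi] at hx
    simp [hx]
  · rw [codisjoint_iff, eq_top_iff]
    intro y _
    rw [Submodule.mem_sup]
    refine ⟨i (p y), ⟨p y, rfl⟩, y - i (p y), ?_, by abel⟩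
    simp [hpi]

/-- A nonzero retract of an indecomposable module is the whole module. -/
lemma Indec.equiv_of_retract {X Y : ModuleCat.{0} Λ} (hX : Nontrivial X) (hY : Indec Λ Y)
    (i : X →ₗ[Λ] Y) (p : Y →ₗ[Λ] X) (h : p ∘ₗ i = LinearMap.id) : Nonempty (X ≃ₗ[Λ] Y) := by
  obtain ⟨N, N', hc, ⟨e⟩⟩ := isSummand_of_retract i p h
  rcases hY.2 N N' hc with h0 | h0
  · subst h0
    obtain ⟨x, hx⟩ := exists_ne (0 : X)
    exact absurd (e.injective (Subsingleton.elim (e x) (e 0))) hx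
  · subst h0
    have : N = ⊤ := by simpa using hc.sup_eq_top
    subst this
    exact ⟨e.trans Submodule.topEquiv⟩

lemma Indec.of_equiv {X Y : ModuleCat.{0} Λ} (hX : Indec Λ X) (e : X ≃ₗ[Λ] Y) : Indec Λ Y := by
  have := hX.1
  refine ⟨e.symm.toEquiv.nontrivial, fun N N' hc => ?_⟩
  have hc' := hc.map (Submodule.orderIsoMapComap e.symm)
  rcases hX.2 _ _ hc' with h | h
  · left
    exact (map_eq_bot_iff (Submodule.orderIsoMapComap e.symm)).1 h
  · right
    exact (map_eq_bot_iff (Submodule.orderIsoMapComap e.symm)).1 h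

lemma IsUniserial.indec {X : ModuleCat.{0} Λ} (h : IsUniserial Λ X) (hX : Nontrivial X) :
    Indec Λ X := by
  refine ⟨hX, fun N N' hc => ?_⟩
  rcases h N N' with hle | hle
  · left; exact le_bot_iff.1 (hc.disjoint.le_bot.trans' (le_inf le_rfl hle))
  · right; exact le_bot_iff.1 (hc.disjoint.le_bot.trans' (le_inf hle le_rfl))

lemma IsUniserial.of_injective {X Y : ModuleCat.{0} Λ} (h : IsUniserial Λ Y) (f : X →ₗ[Λ] Y)
    (hf : Function.Injective f) : IsUniserial Λ X := by
  intro N N'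
  rcases h (N.map f) (N'.map f) with hle | hle
  · exact .inl ((Submodule.map_le_map_iff_of_injective hf _ _).1 hle)
  · exact .inr ((Submodule.map_le_map_iff_of_injective hf _ _).1 hle)

/-- No composite of `f` with a map back to its source is injective. When `X` is uniserial of
finite length, this says that `f` is not a split monomorphism. -/
def NonSplit {X M : Type} [AddCommGroup X] [Module Λ X] [AddCommGroup M] [Module Λ M]
    (f : X →ₗ[Λ] M) : Prop :=
  ∀ g : M →ₗ[Λ] X, ¬ Function.Injective (g ∘ₗ f)

section

variable {X M N : Type} [AddCommGroup X] [Module Λ X] [AddCommGroup M] [Module Λ M]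
  [AddCommGroup N] [Module Λ N]

lemma NonSplit.zero [Nontrivial X] : NonSplit (0 : X →ₗ[Λ] M) := by
  intro g hg
  obtain ⟨x, hx⟩ := exists_ne (0 : X)
  exact hx (hg (by simp))

/-- Nonzero kernels of endomorphisms of a uniserial module are comparable, so two of them
intersect nontrivially: this is why the non-split maps are closed under addition. -/
lemma NonSplit.add (hX : IsUniserial Λ (ModuleCat.of Λ X)) {f f' : X →ₗ[Λ] M} (hf : NonSplit f)
    (hf' : NonSplit f') : NonSplit (f + f') := by
  have key : ∀ a b : X →ₗ[Λ] X, LinearMap.ker a ≤ LinearMap.ker b →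
      ¬ Function.Injective a → ¬ Function.Injective (a + b) := by
    intro a b hab ha hinj
    apply ha
    rw [← LinearMap.ker_eq_bot] at hinj ⊢
    rw [eq_bot_iff] at hinj ⊢
    intro x hx
    apply hinj
    have := hab hx
    rw [LinearMap.mem_ker] at *
    simp [hx, this]
  intro g
  rw [LinearMap.comp_add]
  rcases hX (LinearMap.ker (g ∘ₗ f)) (LinearMap.ker (g ∘ₗ f')) with h | h
  · exact key _ _ h (hf g)
  · rw [add_comm]
    exact key _ _ h (hf' g)

lemma NonSplit.sum [Nontrivial X] (hX : IsUniserial Λ (ModuleCat.of Λ X)) {ι : Type}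
    (s : Finset ι) (f : ι → X →ₗ[Λ] M) (hf : ∀ i, NonSplit (f i)) :
    NonSplit (∑ i ∈ s, f i) := by
  classical
  induction s using Finset.induction_on with
  | empty => simpa using NonSplit.zero
  | insert a s ha ih => rw [Finset.sum_insert ha]; exact (hf a).add hX ih

lemma NonSplit.comp {f : X →ₗ[Λ] M} (hf : NonSplit f) (h : M →ₗ[Λ] N) : NonSplit (h ∘ₗ f) :=
  fun g => by rw [← LinearMap.comp_assoc]; exact hf _

/-- A map that is not non-split is a split monomorphism. -/
lemma exists_retraction_of_not_nonSplit [IsArtinian Λ X] {f : X →ₗ[Λ] M} (hf : ¬ NonSplit f) :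
    ∃ p : M →ₗ[Λ] X, p ∘ₗ f = LinearMap.id := by
  simp only [NonSplit, not_forall, not_not] at hf
  obtain ⟨g, hg⟩ := hf
  let e := LinearEquiv.ofBijective _ (IsArtinian.bijective_of_injective_endomorphism _ hg)
  refine ⟨e.symm.toLinearMap ∘ₗ g, ?_⟩
  ext x
  exact e.symm_apply_apply x

end

end Retracts

/-! ### Multiplicity of an indecomposable summand -/

section Multiplicity

variable {R Λ : Type} [CommRing R] [Ring Λ] [Algebra R Λ]
variable {X : Type} [AddCommGroup X] [Module Λ X] [Nontrivial X]
variable (hX : IsUniserial Λ (ModuleCat.of Λ X))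
variable (M : Type) [AddCommGroup M] [Module Λ M] [Module R M] [IsScalarTower R Λ M]

/-- The radical of `Hom(X, M)` for `X` uniserial: the `R`-submodule of the maps that are `NonSplit`,
which for `X` of finite length are those that are not split monomorphisms. -/
def homRad : Submodule R (X →ₗ[Λ] M) where
  carrier := {f | NonSplit f}
  zero_mem' := NonSplit.zero
  add_mem' hf hg := hf.add hX hg
  smul_mem' r f hf g hg := by
    refine hf g ?_
    rw [← LinearMap.ker_eq_bot, eq_bot_iff] at hg ⊢
    intro x hx
    apply hg
    rw [LinearMap.mem_ker] at hx ⊢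
    simp only [LinearMap.comp_apply, LinearMap.smul_apply] at hx ⊢
    rw [← algebraMap_smul Λ r (f x), map_smul, hx, smul_zero]

/-- `R`-length of `Hom(X, M) / rad(X, M)`: an additive invariant of `M` detecting the summands of
`M` isomorphic to `X`. -/
def multLength : ℕ∞ := Module.length R ((X →ₗ[Λ] M) ⧸ homRad (R := R) hX M)

lemma multLength_eq_zero_iff :
    multLength (R := R) hX M = 0 ↔ ∀ f : X →ₗ[Λ] M, NonSplit f := by
  rw [multLength, Module.length_eq_zero_iff, Submodule.Quotient.subsingleton_iff, eq_top_iff]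
  exact ⟨fun h f => h (Submodule.mem_top (x := f)), fun h f _ => h f⟩

lemma multLength_ne_top [IsArtinianRing R] [Module.Finite R M] [Module.Finite Λ X] :
    multLength (R := R) hX M ≠ ⊤ := by
  rw [multLength, Module.length_ne_top_iff, isFiniteLength_iff_isNoetherian_isArtinian]
  obtain ⟨s, hs⟩ := Module.Finite.fg_top (R := Λ) (M := X)
  -- A map out of `X` is determined by its values on a finite generating set.
  let ev : (X →ₗ[Λ] M) →ₗ[R] (s → M) :=
    { toFun := fun f i => f i, map_add' := fun _ _ => rfl, map_smul' := fun _ _ => rfl }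
  have hev : Function.Injective ev := by
    intro f g hfg
    apply LinearMap.ext_on hs
    intro x hx
    exact congr_fun hfg ⟨x, hx⟩
  have h1 : IsNoetherian R (X →ₗ[Λ] M) := isNoetherian_of_injective ev hev
  have h2 : IsArtinian R (X →ₗ[Λ] M) := isArtinian_of_injective ev hev
  exact ⟨inferInstance, inferInstance⟩

variable (A B : Type) [AddCommGroup A] [Module Λ A] [Module R A] [IsScalarTower R Λ A]
  [AddCommGroup B] [Module Λ B] [Module R B] [IsScalarTower R Λ B]

lemma multLength_add (e : M ≃ₗ[Λ] (A × B)) :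
    multLength (R := R) hX M = multLength (R := R) hX A + multLength (R := R) hX B := by
  let a : M →ₗ[Λ] A := LinearMap.fst Λ A B ∘ₗ e.toLinearMap
  let b : M →ₗ[Λ] B := LinearMap.snd Λ A B ∘ₗ e.toLinearMap
  let i : A →ₗ[Λ] M := e.symm.toLinearMap ∘ₗ LinearMap.inl Λ A B
  let j : B →ₗ[Λ] M := e.symm.toLinearMap ∘ₗ LinearMap.inr Λ A B
  let Ψ : (X →ₗ[Λ] M) →ₗ[R]
      ((X →ₗ[Λ] A) ⧸ homRad (R := R) hX A) × ((X →ₗ[Λ] B) ⧸ homRad (R := R) hX B) :=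
    { toFun := fun f => (Submodule.Quotient.mk (a ∘ₗ f), Submodule.Quotient.mk (b ∘ₗ f))
      map_add' := fun f g => by simp [LinearMap.comp_add]
      map_smul' := fun r f => by
        have h1 : a ∘ₗ (r • f) = r • (a ∘ₗ f) := by
          ext x
          simp only [LinearMap.comp_apply, LinearMap.smul_apply]
          rw [← algebraMap_smul Λ r (f x), map_smul, algebraMap_smul]
        have h2 : b ∘ₗ (r • f) = r • (b ∘ₗ f) := by
          ext x
          simp only [LinearMap.comp_apply, LinearMap.smul_apply]
          rw [← algebraMap_smul Λ r (f x), map_smul, algebraMap_smul]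
        simp [h1, h2] }
  have hsurj : Function.Surjective Ψ := by
    rintro ⟨u, v⟩
    obtain ⟨f, rfl⟩ := Submodule.Quotient.mk_surjective _ u
    obtain ⟨g, rfl⟩ := Submodule.Quotient.mk_surjective _ v
    refine ⟨e.symm.toLinearMap ∘ₗ f.prod g, ?_⟩
    refine Prod.ext ?_ ?_
    · change Submodule.Quotient.mk _ = _
      congr 1
      ext x
      simp [a]
    · change Submodule.Quotient.mk _ = _
      congr 1
      ext x
      simp [b]
  have hker : LinearMap.ker Ψ = homRad (R := R) hX M := by
    ext f
    have h0 : Ψ f = 0 ↔ NonSplit (a ∘ₗ f) ∧ NonSplit (b ∘ₗ f) := by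
      rw [Prod.ext_iff]
      exact and_congr (Submodule.Quotient.mk_eq_zero _) (Submodule.Quotient.mk_eq_zero _)
    rw [LinearMap.mem_ker, h0]
    constructor
    · rintro ⟨h1, h2⟩
      have hf : f = i ∘ₗ (a ∘ₗ f) + j ∘ₗ (b ∘ₗ f) := by
        ext x
        simp only [i, j, a, b, LinearMap.add_apply, LinearMap.comp_apply, LinearEquiv.coe_coe]
        rw [← map_add]
        simp
      change NonSplit f
      rw [hf]
      exact (h1.comp i).add hX (h2.comp j)
    · intro h
      exact ⟨NonSplit.comp h a, NonSplit.comp h b⟩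
  rw [multLength, ← hker, (LinearMap.quotKerEquivOfSurjective Ψ hsurj).length_eq,
    Module.length_prod]
  rfl

end Multiplicity

/-! ### Classes of indecomposables in `K₀` -/

section Classes

variable {R Λ : Type} [CommRing R] [Ring Λ] [Algebra R Λ] [IsArtinianRing R] [Module.Finite R Λ]

/-- `multLength` as an integer, with the `R`-action on `M` restricted along `R → Λ`. By
`multLength_ne_top` the truncation from `ℕ∞` loses nothing for `X` and `M` finitely generated. -/
def mult {X : ModuleCat.{0} Λ} (R : Type) [CommRing R] [Algebra R Λ] (hX : IsUniserial Λ X)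
    [Nontrivial X] (M : ModuleCat.{0} Λ) : ℤ :=
  letI : Module R M := Module.compHom M (algebraMap R Λ)
  haveI : IsScalarTower R Λ M :=
    ⟨fun r l m => by rw [Algebra.smul_def, mul_smul]; rfl⟩
  ((multLength (R := R) (X := X) hX M).toNat : ℤ)

variable {X : ModuleCat.{0} Λ} (hX : IsUniserial Λ X) [Nontrivial X] [Module.Finite Λ X]

variable (R) in
lemma mult_eq_zero_iff (M : ModuleCat.{0} Λ) [Module.Finite Λ M] :
    mult R hX M = 0 ↔ ∀ f : X →ₗ[Λ] M, NonSplit f := by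
  let : Module R M := Module.compHom M (algebraMap R Λ)
  have : IsScalarTower R Λ M :=
    ⟨fun r l m => by rw [Algebra.smul_def, mul_smul]; rfl⟩
  have : Module.Finite R M := Module.Finite.trans Λ M
  have h := multLength_ne_top (R := R) (X := X) hX M
  rw [← multLength_eq_zero_iff (R := R) (X := X) hX M]
  change ((multLength (R := R) (X := X) hX M).toNat : ℤ) = 0 ↔ _
  rw [Nat.cast_eq_zero, ENat.toNat_eq_zero]
  tauto

lemma mult_add (A B C : ModuleCat.{0} Λ) [Module.Finite Λ A] [Module.Finite Λ B]
    (e : C ≃ₗ[Λ] (A × B)) : mult R hX C = mult R hX A + mult R hX B := by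
  let : Module R A := Module.compHom A (algebraMap R Λ)
  have : IsScalarTower R Λ A :=
    ⟨fun r l m => by rw [Algebra.smul_def, mul_smul]; rfl⟩
  have : Module.Finite R A := Module.Finite.trans Λ A
  let : Module R B := Module.compHom B (algebraMap R Λ)
  have : IsScalarTower R Λ B :=
    ⟨fun r l m => by rw [Algebra.smul_def, mul_smul]; rfl⟩
  have : Module.Finite R B := Module.Finite.trans Λ B
  let : Module R C := Module.compHom C (algebraMap R Λ)
  have : IsScalarTower R Λ C :=
    ⟨fun r l m => by rw [Algebra.smul_def, mul_smul]; rfl⟩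
  have hA := multLength_ne_top (R := R) (X := X) hX A
  have hB := multLength_ne_top (R := R) (X := X) hX B
  have h := multLength_add (R := R) (X := X) hX C A B e
  change ((multLength (R := R) (X := X) hX C).toNat : ℤ) =
    ((multLength (R := R) (X := X) hX A).toNat : ℤ) +
    ((multLength (R := R) (X := X) hX B).toNat : ℤ)
  rw [h, ENat.toNat_add hA hB, Nat.cast_add]

/-- For `X` nonprojective, `mult` kills projectives and so descends to a homomorphism on `K₀`. -/
lemma exists_multHom (hXp : ¬ Module.Projective Λ X) :
    ∃ μ : K0 Λ →+ ℤ, ∀ M : FGMod Λ, μ (classOf Λ M) = mult R hX M.1 := by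
  have hart : IsArtinianRing Λ := IsArtinianRing.of_finite R Λ
  let F : FreeAbelianGroup (FGMod Λ) →+ ℤ := FreeAbelianGroup.lift fun M => mult R hX M.1
  have hF : K0Rel Λ ≤ F.ker := by
    refine (AddSubgroup.closure_le _).2 ?_
    rintro x (⟨A, B, C, ⟨e⟩, rfl⟩ | ⟨P, hP, rfl⟩)
    · have := A.2
      have := B.2
      have := mult_add (R := R) hX A.1 B.1 C.1 e
      simp [F, this]
    · have := P.2
      have h0 : mult R hX P.1 = 0 := by
        refine (mult_eq_zero_iff R hX P.1).2 fun f => ?_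
        by_contra hf
        obtain ⟨p, hp⟩ := exists_retraction_of_not_nonSplit hf
        exact hXp (Module.Projective.of_split f p hp)
      simp [F, h0]
  exact ⟨QuotientAddGroup.lift (K0Rel Λ) F hF, fun M => by
    change F (FreeAbelianGroup.of M) = _
    simp [F]⟩

lemma classOf_eq_of_equiv {A B : FGMod Λ} (e : A.1 ≃ₗ[Λ] B.1) : classOf Λ A = classOf Λ B := by
  let Z : FGMod Λ := ⟨ModuleCat.of Λ PUnit, inferInstanceAs (Module.Finite Λ PUnit)⟩
  have hZ : classOf Λ Z = 0 := by
    refine (QuotientAddGroup.eq_zero_iff _).2 (AddSubgroup.subset_closure (.inr ⟨Z, ?_, rfl⟩))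
    exact inferInstanceAs (Module.Projective Λ PUnit)
  have h : classOf Λ A - classOf Λ B - classOf Λ Z = 0 := by
    refine (QuotientAddGroup.eq_zero_iff
      (FreeAbelianGroup.of A - FreeAbelianGroup.of B - FreeAbelianGroup.of Z)).2
      (AddSubgroup.subset_closure (.inl ⟨B, Z, A, ⟨?_⟩, rfl⟩))
    exact e.trans (LinearEquiv.prodUnique (R := Λ) (M := B.1) (M₂ := PUnit)).symm
  rw [hZ, sub_zero, sub_eq_zero] at h
  exact h

lemma classOf_eq_zero {P : FGMod Λ} (hP : Module.Projective Λ P.1) : classOf Λ P = 0 :=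
  (QuotientAddGroup.eq_zero_iff _).2 (AddSubgroup.subset_closure (.inr ⟨P, hP, rfl⟩))

/-- Pairwise non-isomorphic, nonprojective uniserial modules have independent classes in `K₀`. -/
lemma linearIndependent_classOf (R : Type) {Λ : Type} [CommRing R] [Ring Λ] [Algebra R Λ]
    [IsArtinianRing R] [Module.Finite R Λ] {ι : Type} (N : ι → FGMod Λ)
    (hu : ∀ i, IsUniserial Λ (N i).1) (hn : ∀ i, Nontrivial (N i).1)
    (hp : ∀ i, ¬ Module.Projective Λ (N i).1)
    (hdist : ∀ i j, Nonempty ((N i).1 ≃ₗ[Λ] (N j).1) → i = j) :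
    LinearIndependent ℤ (fun i => classOf Λ (N i)) := by
  have hart : IsArtinianRing Λ := IsArtinianRing.of_finite R Λ
  have hfin := fun i => (N i).2
  rw [linearIndependent_iff']
  intro s c hc j hj
  obtain ⟨μ, hμ⟩ := exists_multHom (R := R) (hu j) (hp j)
  have h := congrArg μ hc
  rw [map_sum, map_zero, Finset.sum_eq_single j] at h
  · rw [map_zsmul, hμ, smul_eq_mul, mul_eq_zero] at h
    refine h.resolve_right fun h0 => ?_
    exact (mult_eq_zero_iff R (hu j) (N j).1).1 h0 LinearMap.id LinearMap.id
      (fun x y hxy => hxy)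
  · intro k _ hkj
    rw [map_zsmul, hμ, (mult_eq_zero_iff R (hu j) (N k).1).2, smul_zero]
    intro f
    by_contra hf
    obtain ⟨p, hp⟩ := exists_retraction_of_not_nonSplit hf
    exact hkj (hdist j k (Indec.equiv_of_retract (hn j) ((hu k).indec (hn k)) f p hp)).symm
  · exact fun h => absurd hj h

end Classes

/-! ### Syzygies -/

section Syzygies

variable {Λ : Type} [Ring Λ]

/-- Uniqueness of projective covers, hence of syzygies. -/
lemma IsSyzygy.unique {X X' Y Y' : ModuleCat.{0} Λ} (h : IsSyzygy Λ Y X) (h' : IsSyzygy Λ Y' X')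
    (e : X ≃ₗ[Λ] X') : Nonempty (Y ≃ₗ[Λ] Y') := by
  obtain ⟨P, f, ⟨hP, hf, hfs⟩, ⟨u⟩⟩ := h
  obtain ⟨Q, g, ⟨hQ, hg, hgs⟩, ⟨v⟩⟩ := h'
  obtain ⟨k, hk⟩ := Module.projective_lifting_property g (e.toLinearMap ∘ₗ f) hg
  have hk' : ∀ p, g (k p) = e (f p) := fun p => LinearMap.congr_fun hk p
  have hksurj : Function.Surjective k := by
    rw [← LinearMap.range_eq_top]
    apply hgs
    rw [eq_top_iff]
    intro q _
    obtain ⟨p, hp⟩ := hf (e.symm (g q))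
    rw [Submodule.mem_sup]
    refine ⟨k p, ⟨p, rfl⟩, q - k p, ?_, by abel⟩
    simp [hk', hp]
  obtain ⟨s, hs⟩ := Module.projective_lifting_property k LinearMap.id hksurj
  have hs' : ∀ q, k (s q) = q := fun q => LinearMap.congr_fun hs q
  have hssurj : Function.Surjective s := by
    rw [← LinearMap.range_eq_top]
    apply hfs
    rw [eq_top_iff]
    intro p _
    rw [Submodule.mem_sup]
    refine ⟨s (k p), ⟨k p, rfl⟩, p - s (k p), ?_, by abel⟩
    rw [LinearMap.mem_ker, map_sub, sub_eq_zero]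
    apply e.injective
    rw [← hk', ← hk', hs']
  have hkinj : Function.Injective k := by
    intro a b hab
    obtain ⟨a, rfl⟩ := hssurj a
    obtain ⟨b, rfl⟩ := hssurj b
    rw [hs', hs'] at hab
    rw [hab]
  let K : P ≃ₗ[Λ] Q := LinearEquiv.ofBijective k ⟨hkinj, hksurj⟩
  have hker : (LinearMap.ker f).map K.toLinearMap = LinearMap.ker g := by
    ext q
    constructor
    · rintro ⟨p, hp, rfl⟩
      have hp' : f p = 0 := hp
      change g (k p) = 0
      rw [hk', hp', map_zero]
    · intro hq
      refine ⟨K.symm q, ?_, K.apply_symm_apply q⟩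
      have h1 : g (k (K.symm q)) = 0 := by
        rw [show k (K.symm q) = q from K.apply_symm_apply q]; exact hq
      rw [hk'] at h1
      exact e.map_eq_zero_iff.1 h1
  exact ⟨(u.trans (K.submoduleMap (LinearMap.ker f))).trans
    ((LinearEquiv.ofEq _ _ hker).trans v.symm)⟩

lemma IsNthSyzygy.unique {t : ℕ} {X X' Y Y' : ModuleCat.{0} Λ} (h : IsNthSyzygy Λ t Y X)
    (h' : IsNthSyzygy Λ t Y' X') (e : X ≃ₗ[Λ] X') : Nonempty (Y ≃ₗ[Λ] Y') := by
  induction t generalizing X X' with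
  | zero =>
    obtain ⟨u⟩ := h
    obtain ⟨v⟩ := h'
    exact ⟨(u.trans e).trans v.symm⟩
  | succ t ih =>
    obtain ⟨Z, hZ, h⟩ := h
    obtain ⟨Z', hZ', h'⟩ := h'
    obtain ⟨w⟩ := hZ.unique hZ' e
    exact ih h h' w

lemma IsSyzygy.congr {X X' Y : ModuleCat.{0} Λ} (h : IsSyzygy Λ Y X) (e : X ≃ₗ[Λ] X') :
    IsSyzygy Λ Y X' := by
  obtain ⟨P, f, ⟨hP, hf, hfs⟩, ⟨u⟩⟩ := h
  have hk : LinearMap.ker (e.toLinearMap ∘ₗ f) = LinearMap.ker f := by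
    rw [LinearMap.ker_comp, LinearEquiv.ker, Submodule.comap_bot]
  refine ⟨P, e.toLinearMap ∘ₗ f, ⟨hP, e.surjective.comp hf, ?_⟩, ?_⟩
  · rw [hk]; exact hfs
  · rw [hk]; exact ⟨u⟩

lemma IsNthSyzygy.congr {t : ℕ} {X X' Y : ModuleCat.{0} Λ} (h : IsNthSyzygy Λ t Y X)
    (e : X ≃ₗ[Λ] X') : IsNthSyzygy Λ t Y X' := by
  cases t with
  | zero => obtain ⟨u⟩ := h; exact ⟨u.trans e⟩
  | succ t => obtain ⟨Z, hZ, h⟩ := h; exact ⟨Z, hZ.congr e, h⟩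

lemma IsNthSyzygy.congr_left {t : ℕ} {X Y Y' : ModuleCat.{0} Λ} (h : IsNthSyzygy Λ t Y X)
    (e : Y ≃ₗ[Λ] Y') : IsNthSyzygy Λ t Y' X := by
  induction t generalizing X with
  | zero => obtain ⟨u⟩ := h; exact ⟨e.symm.trans u⟩
  | succ t ih => obtain ⟨Z, hZ, h⟩ := h; exact ⟨Z, hZ, ih h⟩

lemma isSyzygy_of_projective {X : ModuleCat.{0} Λ} (hX : Module.Projective Λ X) :
    IsSyzygy Λ (ModuleCat.of Λ PUnit) X := by
  have hk : LinearMap.ker (LinearMap.id : X →ₗ[Λ] X) = ⊥ := LinearMap.ker_id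
  refine ⟨X, LinearMap.id, ⟨hX, Function.surjective_id, ?_⟩, ?_⟩
  · rw [hk]; intro N hN; simpa using hN
  · rw [hk]
    exact ⟨{ toFun := fun _ => 0, invFun := fun _ => PUnit.unit, map_add' := by simp,
             map_smul' := by simp, left_inv := fun _ => rfl,
             right_inv := fun _ => Subsingleton.elim _ _ }⟩

lemma IsNthSyzygy.projective {t : ℕ} {X Y : ModuleCat.{0} Λ} (h : IsNthSyzygy Λ t Y X)
    (hX : Module.Projective Λ X) : Module.Projective Λ Y := by
  induction t generalizing X with
  | zero => obtain ⟨u⟩ := h; exact Module.Projective.of_equiv u.symm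
  | succ t ih =>
    obtain ⟨Z, hZ, h⟩ := h
    obtain ⟨e⟩ := hZ.unique (isSyzygy_of_projective hX) (LinearEquiv.refl Λ X)
    have : Module.Projective Λ (ModuleCat.of Λ PUnit) :=
      inferInstanceAs (Module.Projective Λ PUnit)
    exact ih h (Module.Projective.of_equiv e.symm)

/-- The image of a superfluous submodule is superfluous. -/
lemma superfluous_map {P Q : Type} [AddCommGroup P] [Module Λ P] [AddCommGroup Q] [Module Λ Q]
    (j : P →ₗ[Λ] Q) {K : Submodule Λ P} (hK : ∀ N : Submodule Λ P, N ⊔ K = ⊤ → N = ⊤)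
    (N : Submodule Λ Q) (h : N ⊔ K.map j = ⊤) : N = ⊤ := by
  have h1 : N.comap j = ⊤ := by
    apply hK
    rw [eq_top_iff]
    intro p _
    have hp : j p ∈ N ⊔ K.map j := h ▸ Submodule.mem_top
    obtain ⟨n, hn, _, ⟨k, hk, rfl⟩, hs⟩ := Submodule.mem_sup.1 hp
    refine Submodule.mem_sup.2 ⟨p - k, ?_, k, hk, by abel⟩
    rw [Submodule.mem_comap, map_sub, ← hs, add_sub_cancel_right]
    exact hn
  have h2 : K.map j ≤ N := by
    rw [Submodule.map_le_iff_le_comap, h1]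
    exact le_top
  rwa [sup_eq_left.2 h2] at h

/-- The syzygy of a finite direct sum is the direct sum of the syzygies. -/
lemma isSyzygy_pi {m : ℕ} {X Y : Fin m → ModuleCat.{0} Λ} (h : ∀ i, IsSyzygy Λ (Y i) (X i)) :
    IsSyzygy Λ (ModuleCat.of Λ (∀ i, Y i)) (ModuleCat.of Λ (∀ i, X i)) := by
  choose P f hf u using h
  have hP := fun i => (hf i).1
  let F : (∀ i, P i) →ₗ[Λ] (∀ i, X i) := LinearMap.piMap f
  have hF : ∀ p i, F p i = f i (p i) := fun p i => rfl
  refine ⟨ModuleCat.of Λ (∀ i, P i), F, ⟨?_, ?_, ?_⟩, ?_⟩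
  · have : Module.Projective Λ (Π₀ i, P i) := inferInstance
    exact Module.Projective.of_equiv (DFinsupp.linearEquivFunOnFintype (R := Λ))
  · intro x
    choose p hp using fun i => (hf i).2.1 (x i)
    exact ⟨p, funext hp⟩
  · intro N hN
    -- The kernel is the sum of the superfluous submodules `ker (f i)`; absorb them one by one.
    have hs : ∀ s : Finset (Fin m),
        N ⊔ s.sup (fun i => (LinearMap.ker (f i)).map (LinearMap.single Λ (fun i => P i) i)) = ⊤ →
          N = ⊤ := by
      intro s
      induction s using Finset.induction_on with
      | empty => intro h; simpa using h
      | insert a s ha ih =>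
        intro h
        apply ih
        rw [Finset.sup_insert, sup_comm (Submodule.map _ _), ← sup_assoc] at h
        exact superfluous_map _ (hf a).2.2 _ h
    apply hs Finset.univ
    rw [eq_top_iff]
    refine hN.ge.trans (sup_le_sup_left ?_ N)
    intro p hp
    have hp' : ∀ i, f i (p i) = 0 := fun i => congr_fun (show F p = 0 from hp) i
    rw [← Finset.univ_sum_single p]
    refine Submodule.sum_mem _ fun i hi => ?_
    refine (Finset.le_sup (f := fun i =>
      (LinearMap.ker (f i)).map (LinearMap.single Λ (fun i => P i) i)) hi) ?_
    exact ⟨p i, hp' i, rfl⟩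
  · have u' := fun i => (u i).some
    let j : (∀ i, Y i) →ₗ[Λ] (∀ i, P i) :=
      LinearMap.piMap fun i => (LinearMap.ker (f i)).subtype ∘ₗ (u' i).toLinearMap
    have hj : Function.Injective j := by
      intro a b hab
      funext i
      have h1 : ((u' i (a i) : LinearMap.ker (f i)) : P i) = (u' i (b i) : LinearMap.ker (f i)) :=
        congr_fun hab i
      exact (u' i).injective (Subtype.ext h1)
    have hr : LinearMap.range j = LinearMap.ker F := by
      ext p
      constructor
      · rintro ⟨a, rfl⟩
        rw [LinearMap.mem_ker]
        funext i
        exact (u' i (a i)).2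
      · intro hp
        have hp' : ∀ i, f i (p i) = 0 := fun i => congr_fun (show F p = 0 from hp) i
        refine ⟨fun i => (u' i).symm ⟨p i, hp' i⟩, ?_⟩
        funext i
        change (((u' i) ((u' i).symm ⟨p i, hp' i⟩) : LinearMap.ker (f i)) : P i) = p i
        rw [LinearEquiv.apply_symm_apply]
    exact ⟨(LinearEquiv.ofInjective j hj).trans (LinearEquiv.ofEq _ _ hr)⟩

lemma isNthSyzygy_pi {t m : ℕ} {X Y : Fin m → ModuleCat.{0} Λ}
    (h : ∀ i, IsNthSyzygy Λ t (Y i) (X i)) :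
    IsNthSyzygy Λ t (ModuleCat.of Λ (∀ i, Y i)) (ModuleCat.of Λ (∀ i, X i)) := by
  induction t generalizing X with
  | zero => exact ⟨LinearEquiv.piCongrRight fun i => (h i).some⟩
  | succ t ih =>
    choose Z hZ h using h
    exact ⟨_, isSyzygy_pi hZ, ih h⟩

/-- In a uniserial module, one of two submodules spanning the module is already everything. -/
lemma IsUniserial.eq_top_of_sup {X : ModuleCat.{0} Λ} (h : IsUniserial Λ X) {A B : Submodule Λ X}
    (hAB : A ⊔ B = ⊤) : A = ⊤ ∨ B = ⊤ := by
  rcases h A B with hle | hle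
  · right; rwa [sup_eq_right.2 hle] at hAB
  · left; rwa [sup_eq_left.2 hle] at hAB

/-- A finitely generated uniserial module over a left Artinian ring all of whose indecomposables
are uniserial has a projective cover: a minimal projective left ideal surjecting onto it is
indecomposable, hence uniserial, so every proper submodule of it is superfluous. -/
lemma exists_syzygy [IsArtinianRing Λ]
    (hnak : ∀ M : ModuleCat.{0} Λ, Module.Finite Λ M → Indec Λ M → IsUniserial Λ M)
    (X : ModuleCat.{0} Λ) (hfin : Module.Finite Λ X) (hX : IsUniserial Λ X) :
    ∃ Y : ModuleCat.{0} Λ, IsSyzygy Λ Y X ∧ Module.Finite Λ Y ∧ IsUniserial Λ Y := by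
  have hPU : IsUniserial Λ (ModuleCat.of Λ PUnit) := fun N N' =>
    .inl (le_of_eq (Subsingleton.elim N N'))
  rcases subsingleton_or_nontrivial X with h0 | hnt
  · have : Module.Free Λ X := Module.Free.of_subsingleton Λ X
    exact ⟨_, isSyzygy_of_projective Module.Projective.of_free,
      inferInstanceAs (Module.Finite Λ PUnit), hPU⟩
  -- Finitely many comparable cyclic submodules span `X`, so one of them is `X`.
  obtain ⟨x, hx⟩ : ∃ x : X, Submodule.span Λ {x} = ⊤ := by
    obtain ⟨s, hs⟩ := Module.Finite.fg_top (R := Λ) (M := X)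
    have key : ∀ s : Finset X, ∃ x : X, Submodule.span Λ (s : Set X) ≤ Submodule.span Λ {x} := by
      classical
      intro s
      induction s using Finset.induction_on with
      | empty => exact ⟨0, by simp⟩
      | insert a s ha ih =>
        obtain ⟨x, hx⟩ := ih
        rw [Finset.coe_insert, Submodule.span_insert]
        rcases hX (Submodule.span Λ {a}) (Submodule.span Λ {x}) with h | h
        · exact ⟨x, sup_le h hx⟩
        · exact ⟨a, sup_le le_rfl (hx.trans h)⟩
    obtain ⟨x, hx⟩ := key s
    exact ⟨x, eq_top_iff.2 (hs.ge.trans hx)⟩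
  let q : Λ →ₗ[Λ] X := LinearMap.toSpanSingleton Λ X x
  have hq : LinearMap.range q = ⊤ := by
    rw [LinearMap.range_toSpanSingleton, hx]
  let S : Set (Submodule Λ Λ) := {N | Module.Projective Λ N ∧ N.map q = ⊤}
  have hS : S.Nonempty := ⟨⊤, Module.Projective.of_equiv (Submodule.topEquiv (R := Λ)).symm, by
    rw [Submodule.map_top, hq]⟩
  obtain ⟨N, ⟨hNp, hNq⟩, hmin⟩ := WellFounded.has_min (wellFounded_lt (α := Submodule Λ Λ)) S hS
  have hNnt : Nontrivial N := by
    rw [Submodule.nontrivial_iff_ne_bot]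
    rintro rfl
    rw [Submodule.map_bot] at hNq
    exact bot_ne_top hNq
  -- A direct summand of `N` surjecting onto `X` equals `N`.
  have hsum : ∀ A B : Submodule Λ N, IsCompl A B → A.map (q ∘ₗ N.subtype) = ⊤ → A = ⊤ := by
    intro A B hc hA
    have hAp : Module.Projective Λ A :=
      Module.Projective.of_split A.subtype (Submodule.projectionOnto A B hc) (by ext a; simp)
    have hmem : A.map N.subtype ∈ S := by
      refine ⟨Module.Projective.of_equiv
        (Submodule.equivMapOfInjective N.subtype N.injective_subtype A), ?_⟩
      rwa [← Submodule.map_comp]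
    have hnlt := hmin _ hmem
    have hle : A.map N.subtype ≤ N := Submodule.map_subtype_le N A
    have heq : A.map N.subtype = N := by
      by_contra hne
      exact hnlt (lt_of_le_of_ne hle hne)
    rw [eq_top_iff]
    intro n _
    have hn : (n : Λ) ∈ A.map N.subtype := heq.symm ▸ n.2
    obtain ⟨a, ha, han⟩ := hn
    rwa [← Subtype.ext han]
  have htop : (⊤ : Submodule Λ N).map (q ∘ₗ N.subtype) = ⊤ := by
    rw [Submodule.map_comp, Submodule.map_top, Submodule.range_subtype, hNq]
  let P : ModuleCat.{0} Λ := ModuleCat.of Λ N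
  have hPfin : Module.Finite Λ P := inferInstanceAs (Module.Finite Λ N)
  have hPind : Indec Λ P := by
    refine ⟨hNnt, fun A B hc => ?_⟩
    have h1 : A.map (q ∘ₗ N.subtype) ⊔ B.map (q ∘ₗ N.subtype) = ⊤ := by
      rw [← Submodule.map_sup]
      exact (congrArg (Submodule.map (q ∘ₗ N.subtype)) hc.sup_eq_top).trans htop
    rcases hX.eq_top_of_sup h1 with h | h
    · right
      have hA := hsum A B hc h
      have := hc.inf_eq_bot
      rwa [hA, top_inf_eq] at this
    · left
      have hB := hsum B A hc.symm h
      have := hc.inf_eq_bot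
      rwa [hB, inf_top_eq] at this
  have hPu := hnak P hPfin hPind
  let f : P →ₗ[Λ] X := q ∘ₗ N.subtype
  have hf : Function.Surjective f := by
    rw [← LinearMap.range_eq_top, ← Submodule.map_top]
    exact htop
  refine ⟨ModuleCat.of Λ (LinearMap.ker f), ⟨P, f, ⟨hNp, hf, ?_⟩, ⟨LinearEquiv.refl _ _⟩⟩, ?_, ?_⟩
  · intro A hA
    refine (hPu.eq_top_of_sup hA).resolve_right fun hk => ?_
    obtain ⟨y, hy⟩ := exists_ne (0 : X)
    obtain ⟨p, rfl⟩ := hf y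
    exact hy (LinearMap.mem_ker.1 (hk ▸ Submodule.mem_top))
  · exact inferInstanceAs (Module.Finite Λ (LinearMap.ker f))
  · exact hPu.of_injective (LinearMap.ker f).subtype (LinearMap.ker f).injective_subtype

end Syzygies

/-! ### Iterating a partial self-map of a finite set -/

section Iterate

variable {ι : Type} (g : Option ι → Option ι)

/-- The image of `A` under the `t`-th iterate of the partial map `g`, where `none` means
undefined. -/
def iterImage (t : ℕ) (A : Set ι) : Set ι := {j | ∃ i ∈ A, g^[t] (some i) = some j}

lemma iterImage_mono {A B : Set ι} (h : A ⊆ B) (t : ℕ) : iterImage g t A ⊆ iterImage g t B :=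
  fun _ ⟨i, hi, hj⟩ => ⟨i, h hi, hj⟩

variable {g}

lemma iterImage_succ (hg : g none = none) (t : ℕ) (A : Set ι) :
    some '' iterImage g (t + 1) A = (g '' (some '' iterImage g t A)) \ {none} := by
  ext o
  constructor
  · rintro ⟨j, ⟨i, hi, hj⟩, rfl⟩
    refine ⟨?_, by simp⟩
    rw [Function.iterate_succ_apply'] at hj
    rcases h : g^[t] (some i) with _ | k
    · rw [h, hg] at hj; cases hj
    · exact ⟨some k, ⟨k, ⟨i, hi, h⟩, rfl⟩, by rw [← h, hj]⟩
  · rintro ⟨⟨_, ⟨k, ⟨i, hi, h⟩, rfl⟩, rfl⟩, hne⟩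
    rcases hk : g (some k) with _ | j
    · simp [hk] at hne
    · exact ⟨j, ⟨i, hi, by rw [Function.iterate_succ_apply', h, hk]⟩, rfl⟩

variable [Finite ι]

lemma ncard_iterImage_antitone (hg : g none = none) (A : Set ι) :
    Antitone fun t => (iterImage g t A).ncard := by
  refine antitone_nat_of_succ_le fun t => ?_
  rw [← Set.ncard_image_of_injective _ (Option.some_injective ι), iterImage_succ hg,
    ← Set.ncard_image_of_injective (iterImage g t A) (Option.some_injective ι)]
  exact (Set.ncard_le_ncard Set.sdiff_subset).trans (Set.ncard_image_le)

/-- If a step loses no element of `iterImage g t B`, then `g` is defined and injective there, so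
the step loses no element of a subset either. -/
lemma ncard_iterImage_succ_eq (hg : g none = none) {A B : Set ι} (hAB : A ⊆ B) {t : ℕ}
    (h : (iterImage g (t + 1) B).ncard = (iterImage g t B).ncard) :
    (iterImage g (t + 1) A).ncard = (iterImage g t A).ncard := by
  have hs := Option.some_injective ι
  rw [← Set.ncard_image_of_injective _ hs, iterImage_succ hg,
    ← Set.ncard_image_of_injective (iterImage g t B) hs] at h
  have h1 : (g '' (some '' iterImage g t B)).ncard = (some '' iterImage g t B).ncard :=
    le_antisymm Set.ncard_image_le (h.ge.trans (Set.ncard_le_ncard Set.sdiff_subset))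
  have hinj : Set.InjOn g (some '' iterImage g t B) := Set.injOn_of_ncard_image_eq h1
  have hnone : none ∉ g '' (some '' iterImage g t B) := by
    intro hn
    have := Set.ncard_sdiff_singleton_lt_of_mem hn
    omega
  have hsub : some '' iterImage g t A ⊆ some '' iterImage g t B :=
    Set.image_mono (iterImage_mono g hAB t)
  rw [← Set.ncard_image_of_injective _ hs, iterImage_succ hg,
    ← Set.ncard_image_of_injective (iterImage g t A) hs,
    Set.sdiff_singleton_eq_self fun hn => hnone (Set.image_mono hsub hn)]
  exact (hinj.mono hsub).ncard_image

lemma ncard_iterImage_stable (hg : g none = none) {A B : Set ι} (hAB : A ⊆ B) {t : ℕ}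
    (h : ∀ j, (iterImage g (t + j) B).ncard = (iterImage g t B).ncard) (j : ℕ) :
    (iterImage g (t + j) A).ncard = (iterImage g t A).ncard := by
  induction j with
  | zero => rfl
  | succ j ih =>
    rw [← ih]
    exact ncard_iterImage_succ_eq hg hAB ((h (j + 1)).trans (h j).symm)

end Iterate

/-! ### Syzygies of the indecomposables of a Nakayama algebra -/

section Nakayama

variable {R Λ : Type} [CommRing R] [Ring Λ] [Algebra R Λ] [IsArtinianRing R] [Module.Finite R Λ]
  {m : ℕ} {M : Fin m → ModuleCat.{0} Λ}

lemma exists_nthSyzygy [IsArtinianRing Λ]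
    (hnak : ∀ M : ModuleCat.{0} Λ, Module.Finite Λ M → Indec Λ M → IsUniserial Λ M)
    (t : ℕ) (X : ModuleCat.{0} Λ) (hfin : Module.Finite Λ X) (hX : IsUniserial Λ X) :
    ∃ Y : ModuleCat.{0} Λ, IsNthSyzygy Λ t Y X ∧ Module.Finite Λ Y ∧ IsUniserial Λ Y := by
  induction t generalizing X with
  | zero => exact ⟨X, ⟨LinearEquiv.refl _ _⟩, hfin, hX⟩
  | succ t ih =>
    obtain ⟨Z, hZ, hZf, hZu⟩ := exists_syzygy hnak X hfin hX
    obtain ⟨Y, hY, hYf, hYu⟩ := ih Z hZf hZu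
    exact ⟨Y, ⟨Z, hZ, hY⟩, hYf, hYu⟩

/-- `g` describes the action of `Ω` on the nonprojective members of the family `M`, with `none`
for a projective (possibly zero) syzygy. -/
def IsOmegaMap (M : Fin m → ModuleCat.{0} Λ)
    (g : Option {i // ¬ Module.Projective Λ (M i)} → Option {i // ¬ Module.Projective Λ (M i)}) :
    Prop :=
  g none = none ∧ ∀ (i : {i // ¬ Module.Projective Λ (M i)}) (Y : ModuleCat.{0} Λ),
    IsSyzygy Λ Y (M i) → (∃ j, g (some i) = some j ∧ Nonempty (Y ≃ₗ[Λ] M j)) ∨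
      (g (some i) = none ∧ Module.Projective Λ Y)

lemma exists_isOmegaMap [IsArtinianRing Λ]
    (hnak : ∀ M : ModuleCat.{0} Λ, Module.Finite Λ M → Indec Λ M → IsUniserial Λ M)
    (hfin : ∀ i, Module.Finite Λ (M i)) (hind : ∀ i, Indec Λ (M i))
    (hcomplete : ∀ X : ModuleCat.{0} Λ, Module.Finite Λ X → Indec Λ X →
      ∃ i, Nonempty (X ≃ₗ[Λ] M i)) :
    ∃ g, IsOmegaMap M g := by
  have key : ∀ i : {i // ¬ Module.Projective Λ (M i)},
      ∃ o : Option {i // ¬ Module.Projective Λ (M i)}, ∀ Y, IsSyzygy Λ Y (M i) →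
        (∃ j, o = some j ∧ Nonempty (Y ≃ₗ[Λ] M j)) ∨ (o = none ∧ Module.Projective Λ Y) := by
    intro i
    obtain ⟨Z, hZ, hZf, hZu⟩ := exists_syzygy hnak (M i) (hfin i) (hnak _ (hfin i) (hind i))
    by_cases hp : Module.Projective Λ Z
    · refine ⟨none, fun Y hY => .inr ⟨rfl, ?_⟩⟩
      obtain ⟨e⟩ := hY.unique hZ (LinearEquiv.refl _ _)
      exact Module.Projective.of_equiv e.symm
    · have hnt : Nontrivial Z := by
        by_contra hn
        rw [not_nontrivial_iff_subsingleton] at hn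
        have : Module.Free Λ Z := Module.Free.of_subsingleton Λ Z
        exact hp Module.Projective.of_free
      obtain ⟨j, ⟨u⟩⟩ := hcomplete Z hZf (hZu.indec hnt)
      refine ⟨some ⟨j, fun h => hp (Module.Projective.of_equiv u.symm)⟩, fun Y hY =>
        .inl ⟨_, rfl, ?_⟩⟩
      obtain ⟨e⟩ := hY.unique hZ (LinearEquiv.refl _ _)
      exact ⟨e.trans u⟩
  choose o ho using key
  exact ⟨fun x => x.bind o, rfl, ho⟩

lemma IsOmegaMap.iterate_none
    {g : Option {i // ¬ Module.Projective Λ (M i)} → Option {i // ¬ Module.Projective Λ (M i)}}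
    (hg : IsOmegaMap M g) (t : ℕ) : g^[t] none = none :=
  Function.iterate_fixed hg.1 t

/-- The iterates of `g` describe the iterated syzygies. -/
lemma IsOmegaMap.iterate
    {g : Option {i // ¬ Module.Projective Λ (M i)} → Option {i // ¬ Module.Projective Λ (M i)}}
    (hg : IsOmegaMap M g) {t : ℕ} (i : {i // ¬ Module.Projective Λ (M i)}) {Y : ModuleCat.{0} Λ}
    (hY : IsNthSyzygy Λ t Y (M i)) :
    (∃ j, g^[t] (some i) = some j ∧ Nonempty (Y ≃ₗ[Λ] M j)) ∨
      (g^[t] (some i) = none ∧ Module.Projective Λ Y) := by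
  induction t generalizing i with
  | zero => exact .inl ⟨i, rfl, hY⟩
  | succ t ih =>
    obtain ⟨Z, hZ, hY⟩ := hY
    rw [Function.iterate_succ_apply]
    rcases hg.2 i Z hZ with ⟨j, hj, ⟨e⟩⟩ | ⟨hj, hp⟩
    · rw [hj]
      exact ih j (hY.congr e)
    · rw [hj, hg.iterate_none]
      exact .inr ⟨rfl, hY.projective hp⟩

variable {g : Option {i // ¬ Module.Projective Λ (M i)} → Option {i // ¬ Module.Projective Λ (M i)}}

/-- The rank of `L^t⟨add N⟩` counts the nonprojective indecomposables that are `t`-th syzygies of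
indecomposable summands of `N`. -/
lemma syzygyRank_eq (R : Type) {Λ : Type} [CommRing R] [Ring Λ] [Algebra R Λ] [IsArtinianRing R]
    [Module.Finite R Λ] {m : ℕ} {M : Fin m → ModuleCat.{0} Λ}
    {g : Option {i // ¬ Module.Projective Λ (M i)} → Option {i // ¬ Module.Projective Λ (M i)}}
    (hnak : ∀ M : ModuleCat.{0} Λ, Module.Finite Λ M → Indec Λ M → IsUniserial Λ M)
    (hfin : ∀ i, Module.Finite Λ (M i)) (hind : ∀ i, Indec Λ (M i))
    (hdist : ∀ i j, Nonempty (M i ≃ₗ[Λ] M j) → i = j)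
    (hcomplete : ∀ X : ModuleCat.{0} Λ, Module.Finite Λ X → Indec Λ X →
      ∃ i, Nonempty (X ≃ₗ[Λ] M i))
    (hg : IsOmegaMap M g) (N : ModuleCat.{0} Λ) (hN : Module.Finite Λ N) (t : ℕ) :
    syzygyRank Λ N t = ((iterImage g t {i | IsSummand Λ (M i) N}).ncard : Cardinal) := by
  have hart : IsArtinianRing Λ := IsArtinianRing.of_finite R Λ
  set D := iterImage g t {i | IsSummand Λ (M i) N} with hD
  let F : {i // ¬ Module.Projective Λ (M i)} → FGMod Λ := fun j => ⟨M j, hfin j⟩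
  let v : D → K0 Λ := fun j => classOf Λ (F j)
  have hv : LinearIndependent ℤ v :=
    linearIndependent_classOf R (fun j : D => F j) (fun j => hnak _ (hfin _) (hind _))
      (fun j => (hind _).1) (fun j => j.1.2)
      (fun i j h => Subtype.ext (Subtype.ext (hdist _ _ h)))
  have hclos : AddSubgroup.closure (addGens Λ N t) = AddSubgroup.closure (Set.range v) := by
    apply le_antisymm
    · refine (AddSubgroup.closure_le _).2 ?_
      rintro k ⟨X, hXi, hXs, Y, hY, rfl⟩
      have hzero : Module.Projective Λ Y.1 →
          classOf Λ Y ∈ AddSubgroup.closure (Set.range v) := fun hp => by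
        rw [classOf_eq_zero hp]; exact zero_mem _
      obtain ⟨a, p, hap⟩ := hXs.exists_retract
      have hXf : Module.Finite Λ X := Module.Finite.of_surjective p
        fun x => ⟨a x, LinearMap.congr_fun hap x⟩
      obtain ⟨i, ⟨e⟩⟩ := hcomplete X hXf hXi
      have hYi := hY.congr e
      by_cases hp : Module.Projective Λ (M i)
      · exact hzero (hYi.projective hp)
      rcases hg.iterate ⟨i, hp⟩ hYi with ⟨j, hj, ⟨u⟩⟩ | ⟨_, hYp⟩
      · refine AddSubgroup.subset_closure ⟨⟨j, ⟨i, hp⟩, ?_, hj⟩, ?_⟩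
        · refine isSummand_of_retract (a ∘ₗ e.symm.toLinearMap) (e.toLinearMap ∘ₗ p) ?_
          ext x
          have := LinearMap.congr_fun hap (e.symm x)
          simp only [LinearMap.comp_apply, LinearMap.id_apply] at this
          simp [this]
        · exact (classOf_eq_of_equiv (A := Y) (B := F j) u).symm
      · exact hzero hYp
    · refine (AddSubgroup.closure_le _).2 ?_
      rintro _ ⟨⟨j, i, hi, hj⟩, rfl⟩
      refine AddSubgroup.subset_closure ⟨M i, hind i, hi, F j, ?_, rfl⟩
      obtain ⟨Y, hY, -, -⟩ := exists_nthSyzygy hnak t (M i) (hfin i) (hnak _ (hfin i) (hind i))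
      rcases hg.iterate i hY with ⟨k, hk, ⟨u⟩⟩ | ⟨hk, -⟩
      · rw [hj, Option.some_inj] at hk
        subst hk
        exact hY.congr_left u
      · rw [hj] at hk; cases hk
  rw [syzygyRank, hclos, ← Submodule.span_int_eq_addSubgroupClosure]
  change Module.rank ℤ (Submodule.span ℤ (Set.range v)) = _
  have hcard : D.ncard = Nat.card (Set.range v) :=
    Nat.card_congr (Equiv.ofInjective v hv.injective)
  rw [rank_span hv, hcard, Nat.cast_card]

/-- `α(Ω^t M†)` counts the nonprojective indecomposables that are `t`-th syzygies of
indecomposables: by the Krull–Schmidt property, a summand of `⨁ Ω^t M_i` is some `Ω^t M_i`. -/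
lemma alpha_eq [IsArtinianRing Λ]
    (hnak : ∀ M : ModuleCat.{0} Λ, Module.Finite Λ M → Indec Λ M → IsUniserial Λ M)
    (hfin : ∀ i, Module.Finite Λ (M i)) (hind : ∀ i, Indec Λ (M i))
    (hdist : ∀ i j, Nonempty (M i ≃ₗ[Λ] M j) → i = j)
    (hg : IsOmegaMap M g) (t : ℕ) (Y : ModuleCat.{0} Λ)
    (hY : IsNthSyzygy Λ t Y (ModuleCat.of Λ (∀ i, M i))) :
    alpha Λ Y = (iterImage g t Set.univ).ncard := by
  choose W hW hWf hWu using fun i =>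
    exists_nthSyzygy hnak t (M i) (hfin i) (hnak _ (hfin i) (hind i))
  obtain ⟨e⟩ := hY.unique (isNthSyzygy_pi hW) (LinearEquiv.refl _ _)
  let e' : Y ≃ₗ[Λ] (∀ i, W i) := e
  have hYf : Module.Finite Λ Y := Module.Finite.equiv e'.symm
  have hsummand : ∀ j ∈ iterImage g t Set.univ, IsSummand Λ (M j) Y := by
    rintro j ⟨i, -, hj⟩
    rcases hg.iterate i (hW i) with ⟨k, hk, ⟨u⟩⟩ | ⟨hk, -⟩
    · rw [hj, Option.some_inj] at hk
      subst hk
      refine isSummand_of_retract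
        (e'.symm.toLinearMap ∘ₗ LinearMap.single Λ (fun i => W i) i.1 ∘ₗ u.symm.toLinearMap)
        (u.toLinearMap ∘ₗ LinearMap.proj i.1 ∘ₗ e'.toLinearMap) ?_
      ext x
      simp
    · rw [hj] at hk; cases hk
  rw [alpha, ← Nat.card_coe_set_eq]
  symm
  refine Nat.card_congr (Equiv.ofBijective (fun j : iterImage g t Set.univ =>
    ⟨Quotient.mk (isoSetoid Λ) (M j.1), M j.1, rfl, hind _, j.1.2, hsummand _ j.2⟩) ⟨?_, ?_⟩)
  · intro a b hab
    exact Subtype.ext (Subtype.ext (hdist _ _ (Quotient.exact (congrArg Subtype.val hab))))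
  · rintro ⟨c, Z, rfl, hZi, hZp, hZs⟩
    obtain ⟨a, p, hap⟩ := hZs.exists_retract
    have hZf : Module.Finite Λ Z := Module.Finite.of_surjective p
      fun x => ⟨a x, LinearMap.congr_fun hap x⟩
    have hZu := hnak Z hZf hZi
    have hZn := hZi.1
    -- The inclusion of `Z` is the sum of its components, so one of them is a split monomorphism.
    obtain ⟨i, hi⟩ : ∃ i, ¬ NonSplit ((LinearMap.proj i ∘ₗ e'.toLinearMap) ∘ₗ a) := by
      by_contra! hall
      have hsum : a = ∑ i, (e'.symm.toLinearMap ∘ₗ LinearMap.single Λ (fun i => W i) i) ∘ₗ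
          ((LinearMap.proj i ∘ₗ e'.toLinearMap) ∘ₗ a) := by
        ext z
        simp only [LinearMap.sum_apply, LinearMap.comp_apply, LinearEquiv.coe_coe,
          LinearMap.proj_apply, LinearMap.single_apply]
        rw [← map_sum, Finset.univ_sum_single, LinearEquiv.symm_apply_apply]
      have hns : NonSplit a := by
        rw [hsum]
        exact NonSplit.sum hZu _ _ fun i => (hall i).comp _
      refine hns p ?_
      rw [hap]
      exact Function.injective_id
    obtain ⟨q, hq⟩ := exists_retraction_of_not_nonSplit hi
    have hWn : Nontrivial (W i) :=
      Function.Injective.nontrivial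
        (f := ((LinearMap.proj i ∘ₗ e'.toLinearMap) ∘ₗ a : Z →ₗ[Λ] W i))
        (Function.LeftInverse.injective (g := q) fun z => LinearMap.congr_fun hq z)
    obtain ⟨u⟩ := Indec.equiv_of_retract hZn ((hWu i).indec hWn) _ q hq
    have hWp : ¬ Module.Projective Λ (W i) := fun h => hZp (Module.Projective.of_equiv u.symm)
    have hMp : ¬ Module.Projective Λ (M i) := fun h => hWp ((hW i).projective h)
    rcases hg.iterate ⟨i, hMp⟩ (hW i) with ⟨j, hj, ⟨w⟩⟩ | ⟨-, h⟩
    · refine ⟨⟨j, ⟨i, hMp⟩, trivial, hj⟩, Subtype.ext (Quotient.sound ?_)⟩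
      exact ⟨(u.trans w).symm⟩
    · exact absurd h hWp

end Nakayama

/-- For a Nakayama algebra with additive generator `M† = ⊕ M_i`,
`φdim Λ = min { t | α(Ω^t M†) = α(Ω^{t+j} M†) for all j ≥ 0 }`. -/
theorem phiDim_eq_alpha_stabilization {R Λ : Type} [CommRing R] [Ring Λ] [Algebra R Λ]
    (hart : IsArtinianRing R) (hfg : Module.Finite R Λ)
    (hnak : ∀ M : ModuleCat.{0} Λ, Module.Finite Λ M → Indec Λ M → IsUniserial Λ M)
    (m : ℕ) (M : Fin m → ModuleCat.{0} Λ)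
    (hfin : ∀ i, Module.Finite Λ (M i)) (hind : ∀ i, Indec Λ (M i))
    (hdist : ∀ i j, Nonempty (M i ≃ₗ[Λ] M j) → i = j)
    (hcomplete : ∀ X : ModuleCat.{0} Λ, Module.Finite Λ X → Indec Λ X →
      ∃ i, Nonempty (X ≃ₗ[Λ] M i)) :
    phiDim Λ = ((sInf {t : ℕ | ∀ (j : ℕ) (Y Z : ModuleCat.{0} Λ),
        IsNthSyzygy Λ t Y (ModuleCat.of Λ (∀ i, M i)) →
        IsNthSyzygy Λ (t + j) Z (ModuleCat.of Λ (∀ i, M i)) →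
        alpha Λ Y = alpha Λ Z} : ℕ) : ℕ∞) := by
  have hart' : IsArtinianRing Λ := IsArtinianRing.of_finite R Λ
  obtain ⟨g, hg⟩ := exists_isOmegaMap hnak hfin hind hcomplete
  let d : Set {i // ¬ Module.Projective Λ (M i)} → ℕ → ℕ := fun A t => (iterImage g t A).ncard
  let I : Set ℕ := {t | ∀ j, d Set.univ (t + j) = d Set.univ t}
  have hIne : I.Nonempty := by
    obtain ⟨n, hn⟩ := WellFoundedLT.antitone_chain_condition
      (ncard_iterImage_antitone hg.1 Set.univ)
    exact ⟨n, fun j => (hn (n + j) (Nat.le_add_right n j)).symm⟩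
  have hrhs : {t : ℕ | ∀ (j : ℕ) (Y Z : ModuleCat.{0} Λ),
      IsNthSyzygy Λ t Y (ModuleCat.of Λ (∀ i, M i)) →
      IsNthSyzygy Λ (t + j) Z (ModuleCat.of Λ (∀ i, M i)) → alpha Λ Y = alpha Λ Z} = I := by
    have hex : ∀ t, ∃ Y, IsNthSyzygy Λ t Y (ModuleCat.of Λ (∀ i, M i)) := by
      intro t
      choose W hW _ _ using fun i =>
        exists_nthSyzygy hnak t (M i) (hfin i) (hnak _ (hfin i) (hind i))
      exact ⟨_, isNthSyzygy_pi hW⟩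
    have hα := alpha_eq hnak hfin hind hdist hg
    ext t
    constructor
    · intro h j
      obtain ⟨Y, hY⟩ := hex t
      obtain ⟨Z, hZ⟩ := hex (t + j)
      have := h j Y Z hY hZ
      rw [hα t Y hY, hα (t + j) Z hZ] at this
      exact this.symm
    · intro h j Y Z hY hZ
      rw [hα t Y hY, hα (t + j) Z hZ]
      exact (h j).symm
  have hphi : ∀ N : FGMod Λ,
      phi Λ N.1 = sInf {t | ∀ j, d {i | IsSummand Λ (M i) N.1} (t + j) =
        d {i | IsSummand Λ (M i) N.1} t} := by
    intro N
    rw [phi]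
    congr 1
    ext t
    simp only [Set.mem_ofPred_eq,
      syzygyRank_eq R hnak hfin hind hdist hcomplete hg N.1 N.2, Nat.cast_inj]
    constructor
    · intro h j
      rcases Nat.eq_zero_or_pos j with rfl | hj
      · rfl
      · exact h j hj
    · intro h j _
      exact h j
  rw [hrhs, phiDim]
  apply le_antisymm
  · refine iSup_le fun N => ?_
    rw [hphi, Nat.cast_le]
    exact Nat.sInf_le fun j =>
      ncard_iterImage_stable hg.1 (Set.subset_univ _) (Nat.sInf_mem hIne) j
  · let T : FGMod Λ := ⟨ModuleCat.of Λ (∀ i, M i), inferInstanceAs (Module.Finite Λ (∀ i, M i))⟩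
    have hT : {i : {i // ¬ Module.Projective Λ (M i)} | IsSummand Λ (M i) T.1} = Set.univ := by
      refine Set.eq_univ_of_forall fun i => ?_
      refine isSummand_of_retract (M := T.1) (LinearMap.single Λ (fun i => M i) i.1)
        (LinearMap.proj i.1) ?_
      ext x
      exact Pi.single_eq_same _ _
    refine le_trans (le_of_eq ?_) (le_iSup (fun N : FGMod Λ => (phi Λ N.1 : ℕ∞)) T)
    rw [hphi, hT]

end PhiDim
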